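/- For integers r ≥ 1 and k ≥ 2 with rk ≥ 3, the error term E_k^r(x) = V_k^r(x) − (2x)^k/ζ(rk) satisfies E_k^r(x) = Ω(x^{k−1}), i.e. limsup_{x→∞} |E_k^r(x)|/x^{k−1} > 0. -/

import Mathlib

open Filter

/-- `V_k^r(x)`: the number of `k`-tuples of nonzero integers with `|x_i| ≤ x`
that are relatively `r`-prime (no prime `p` with `p^r` dividing every `x_i`). -/
noncomputable def V (r k : ℕ) (x : ℝ) : ℕ :=
  Nat.card {t : Fin k → ℤ // (∀ i, t i ≠ 0 ∧ |(t i : ℝ)| ≤ x) ∧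
    ¬ ∃ p : ℕ, p.Prime ∧ ∀ i, (p : ℤ) ^ r ∣ t i}

/-- The Riemann zeta function on real arguments `s > 1`, as a series. -/
noncomputable def zetaR (s : ℝ) : ℝ := ∑' n : ℕ, 1 / ((n : ℝ) + 1) ^ s

/-!
As a function of `x`, `V r k x` is constant on `[n, n + 1)`, whereas `(2 * x) ^ k / ζ(rk)` grows by
at least a constant times `x ^ (k - 1)` between `n` and `x = n + 1 / 2`. Hence the error term cannot
be small compared with `x ^ (k - 1)` at both points.

In `ℝ` the `limsup` of an unbounded function is a junk value, so the matching bound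
`O(x ^ (k - 1))` is needed as well. It comes from Möbius inversion: both `V r k x` and
`(2 * x) ^ k / ζ(rk)` are sums over `d` of `μ d` times `(2 * ⌊x / d ^ r⌋) ^ k`, respectively
`(2 * x / d ^ r) ^ k`, and these differ by `O((x / d ^ r) ^ (k - 1))`, which is summable over `d`
because `r * (k - 1) > 1`.
-/

open ArithmeticFunction Finset
open scoped ArithmeticFunction.Moebius

lemma sub_mul_pow_le_pow_sub_pow {R : Type*} [CommRing R] [PartialOrder R] [IsOrderedRing R]
    {x y : R} {k : ℕ} (hk : k ≠ 0) (hy : 0 ≤ y) (hyx : y ≤ x) :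
    (x - y) * x ^ (k - 1) ≤ x ^ k - y ^ k := by
  rw [← mul_pow_sub_one hk x, ← mul_pow_sub_one hk y, sub_mul]
  gcongr

lemma abs_natFloor_pow_sub_pow_le {R : Type*} [CommRing R] [LinearOrder R] [IsStrictOrderedRing R]
    [FloorSemiring R] {x : R} (hx : 0 ≤ x) (k : ℕ) :
    |(⌊x⌋₊ : R) ^ k - x ^ k| ≤ k * x ^ (k - 1) := by
  have hfloor : (⌊x⌋₊ : R) ≤ x := Nat.floor_le hx
  have hdist : |(⌊x⌋₊ : R) - x| ≤ 1 := by
    rw [abs_le]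
    constructor <;> linarith [Nat.lt_floor_add_one x]
  calc |(⌊x⌋₊ : R) ^ k - x ^ k|
      ≤ |(⌊x⌋₊ : R) - x| * k * max |(⌊x⌋₊ : R)| |x| ^ (k - 1) := abs_pow_sub_pow_le _ _ _
    _ = |(⌊x⌋₊ : R) - x| * (k * x ^ (k - 1)) := by
      rw [Nat.abs_cast, abs_of_nonneg hx, max_eq_right hfloor, mul_assoc]
    _ ≤ k * x ^ (k - 1) := mul_le_of_le_one_left (by positivity) hdist

section CommonRoot

variable {ι : Type*} [Fintype ι]

/-- The greatest natural number whose `r`-th power divides every entry of `t`. It is `0` when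
`r = 0` or `t = 0`. -/
def commonRoot (r : ℕ) (t : ι → ℤ) : ℕ :=
  Nat.floorRoot r (univ.gcd fun i ↦ (t i).natAbs)

lemma dvd_commonRoot_iff {r d : ℕ} {t : ι → ℤ} :
    d ∣ commonRoot r t ↔ ∀ i, (d : ℤ) ^ r ∣ t i := by
  simp [commonRoot, ← Nat.pow_dvd_iff_dvd_floorRoot, Finset.dvd_gcd_iff, ← Int.natCast_dvd]

lemma commonRoot_eq_one_iff {r : ℕ} {t : ι → ℤ} :
    commonRoot r t = 1 ↔ ¬ ∃ p : ℕ, p.Prime ∧ ∀ i, (p : ℤ) ^ r ∣ t i := by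
  simp only [Nat.eq_one_iff_not_exists_prime_dvd, dvd_commonRoot_iff, not_exists, not_and]

lemma commonRoot_ne_zero {r : ℕ} (hr : r ≠ 0) {t : ι → ℤ} (ht : t ≠ 0) : commonRoot r t ≠ 0 := by
  obtain ⟨i, hi⟩ := Function.ne_iff.1 ht
  refine Nat.floorRoot_ne_zero.2 ⟨hr, fun hgcd ↦ hi ?_⟩
  exact Int.natAbs_eq_zero.1 (Finset.gcd_eq_zero_iff.1 hgcd i (mem_univ i))

end CommonRoot

lemma hasSum_moebius_indicator_dvd {n : ℕ} (hn : n ≠ 0) :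
    HasSum (fun d : ℕ ↦ if d ∣ n then (μ d : ℝ) else 0) (if n = 1 then 1 else 0) := by
  have hdivisors : ∑ d ∈ n.divisors, (if d ∣ n then (μ d : ℝ) else 0) = if n = 1 then 1 else 0 := by
    calc ∑ d ∈ n.divisors, (if d ∣ n then (μ d : ℝ) else 0)
        = ∑ d ∈ n.divisors, (μ : ArithmeticFunction ℝ) d :=
          sum_congr rfl fun d hd ↦ by simp [Nat.dvd_of_mem_divisors hd]
      _ = if n = 1 then 1 else 0 := by
        rw [← coe_mul_zeta_apply, coe_moebius_mul_coe_zeta, one_apply]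
  rw [← hdivisors]
  exact hasSum_sum_of_ne_finset_zero fun d hd ↦ if_neg fun hdvd ↦ hd (Nat.mem_divisors.2 ⟨hdvd, hn⟩)

/-- The nonzero integers of absolute value at most `N`. -/
noncomputable def nonzeroIcc (N : ℕ) : Finset ℤ := (Icc (-(N : ℤ)) N).erase 0

lemma mem_nonzeroIcc {N : ℕ} {z : ℤ} : z ∈ nonzeroIcc N ↔ z ≠ 0 ∧ |z| ≤ N := by
  rw [nonzeroIcc, mem_erase, mem_Icc, abs_le]

lemma mem_nonzeroIcc_natFloor {x : ℝ} (hx : 0 ≤ x) {z : ℤ} :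
    z ∈ nonzeroIcc ⌊x⌋₊ ↔ z ≠ 0 ∧ |(z : ℝ)| ≤ x := by
  rw [mem_nonzeroIcc, Int.abs_eq_natAbs, Nat.cast_le, Nat.le_floor_iff hx, Nat.cast_natAbs,
    Int.cast_abs]

lemma card_nonzeroIcc (N : ℕ) : #(nonzeroIcc N) = 2 * N := by
  rw [nonzeroIcc, card_erase_of_mem (by simp), Int.card_Icc]
  omega

lemma filter_dvd_nonzeroIcc (N : ℕ) {m : ℕ} (hm : m ≠ 0) :
    {z ∈ nonzeroIcc N | (m : ℤ) ∣ z} = (nonzeroIcc (N / m)).image ((m : ℤ) * ·) := by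
  have hm_pos : (0 : ℤ) < m := by positivity
  have mul_mem_iff (w : ℤ) : (m : ℤ) * w ∈ nonzeroIcc N ↔ w ∈ nonzeroIcc (N / m) := by
    rw [mem_nonzeroIcc, mem_nonzeroIcc, mul_ne_zero_iff_left hm_pos.ne', abs_mul, Nat.abs_cast,
      Int.natCast_div, Int.le_ediv_iff_mul_le hm_pos, mul_comm]
  ext z
  rw [mem_filter, mem_image]
  constructor
  · rintro ⟨hz, w, rfl⟩
    exact ⟨w, (mul_mem_iff w).1 hz, rfl⟩
  · rintro ⟨w, hw, rfl⟩
    exact ⟨(mul_mem_iff w).2 hw, dvd_mul_right _ _⟩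

lemma card_filter_dvd_nonzeroIcc (N : ℕ) {m : ℕ} (hm : m ≠ 0) :
    #{z ∈ nonzeroIcc N | (m : ℤ) ∣ z} = 2 * (N / m) := by
  rw [filter_dvd_nonzeroIcc N hm,
    card_image_of_injective _ (mul_right_injective₀ (Nat.cast_ne_zero.2 hm)), card_nonzeroIcc]

lemma card_filter_dvd_commonRoot {ι : Type*} [Fintype ι] [DecidableEq ι] (r N : ℕ) {d : ℕ}
    (hd : d ≠ 0) :
    #{t ∈ Fintype.piFinset fun _ : ι ↦ nonzeroIcc N | d ∣ commonRoot r t} =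
      (2 * (N / d ^ r)) ^ Fintype.card ι := by
  have hprod : {t ∈ Fintype.piFinset fun _ : ι ↦ nonzeroIcc N | d ∣ commonRoot r t} =
      Fintype.piFinset fun _ ↦ {z ∈ nonzeroIcc N | ((d ^ r : ℕ) : ℤ) ∣ z} := by
    ext t
    simp [dvd_commonRoot_iff, forall_and]
  rw [hprod, Fintype.card_piFinset, prod_const, card_univ,
    card_filter_dvd_nonzeroIcc N (pow_ne_zero r hd)]

lemma V_eq_card_filter (r k : ℕ) {x : ℝ} (hx : 0 ≤ x) :
    V r k x =
      #{t ∈ Fintype.piFinset fun _ : Fin k ↦ nonzeroIcc ⌊x⌋₊ | commonRoot r t = 1} := by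
  refine Nat.subtype_card _ fun t ↦ ?_
  simp only [mem_filter, Fintype.mem_piFinset, mem_nonzeroIcc_natFloor hx, commonRoot_eq_one_iff]

lemma V_natFloor (r k : ℕ) {x : ℝ} (hx : 0 ≤ x) : V r k ⌊x⌋₊ = V r k x := by
  rw [V_eq_card_filter r k hx, V_eq_card_filter r k (Nat.cast_nonneg _), Nat.floor_natCast]

lemma hasSum_V {r k : ℕ} (hr : r ≠ 0) (hk : k ≠ 0) {x : ℝ} (hx : 0 ≤ x) :
    HasSum (fun d : ℕ ↦ (μ d : ℝ) * (2 * ⌊x / (d : ℝ) ^ r⌋₊) ^ k) (V r k x) := by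
  set box := Fintype.piFinset fun _ : Fin k ↦ nonzeroIcc ⌊x⌋₊ with hbox
  have ne_zero_of_mem_box : ∀ t ∈ box, t ≠ 0 := fun t ht ht0 ↦
    (mem_nonzeroIcc.1 (Fintype.mem_piFinset.1 ht ⟨0, Nat.pos_of_ne_zero hk⟩)).1 (congrFun ht0 _)
  have hsum := hasSum_sum fun t ht ↦
    hasSum_moebius_indicator_dvd (commonRoot_ne_zero hr (ne_zero_of_mem_box t ht))
  rw [V_eq_card_filter r k hx, ← hbox, natCast_card_filter]
  refine hsum.congr_fun fun d ↦ ?_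
  rw [← sum_filter, sum_const, nsmul_eq_mul, mul_comm]
  obtain rfl | hd := eq_or_ne d 0
  · simp
  · rw [card_filter_dvd_commonRoot r _ hd, Fintype.card_fin, ← Nat.cast_pow d r,
      Nat.floor_div_natCast]
    push_cast
    rfl

section Zeta

variable {s : ℝ}

lemma zetaR_pos (hs : 1 < s) : 0 < zetaR s := by
  have hsummable : Summable fun n : ℕ ↦ 1 / ((n : ℝ) + 1) ^ s := by
    exact_mod_cast (summable_nat_add_iff 1).2 (Real.summable_one_div_nat_rpow.2 hs)
  exact hsummable.tsum_pos (fun n ↦ by positivity) 0 (by simp)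

lemma ofReal_zetaR (hs : 1 < s) : (zetaR s : ℂ) = riemannZeta s := by
  rw [zeta_eq_tsum_one_div_nat_add_one_cpow (by simpa using hs), zetaR, Complex.ofReal_tsum]
  refine tsum_congr fun n ↦ ?_
  rw [Complex.ofReal_div, Complex.ofReal_cpow (by positivity)]
  push_cast
  rfl

lemma hasSum_moebius_div_rpow (hs : 1 < s) :
    HasSum (fun d : ℕ ↦ (μ d : ℝ) / (d : ℝ) ^ s) (zetaR s)⁻¹ := by
  have hre : 1 < (s : ℂ).re := by simpa using hs
  have hLSeries : LSeries (fun n ↦ (μ n : ℂ)) s = ((zetaR s)⁻¹ : ℝ) := by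
    rw [Complex.ofReal_inv, ofReal_zetaR hs, ← LSeries_zeta_eq_riemannZeta hre]
    exact eq_inv_of_mul_eq_one_right (LSeries_zeta_mul_Lseries_moebius hre)
  have hsum : HasSum (LSeries.term (fun n ↦ (μ n : ℂ)) s) ((zetaR s)⁻¹ : ℝ) :=
    hLSeries ▸ (LSeriesSummable_moebius_iff.2 hre).LSeriesHasSum
  refine Complex.hasSum_ofReal.1 (hsum.congr_fun fun d ↦ ?_)
  obtain rfl | hd := eq_or_ne d 0
  · simp
  · rw [LSeries.term_of_ne_zero hd, Complex.ofReal_div, Complex.ofReal_cpow (by positivity)]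
    push_cast
    rfl

end Zeta

/-- The error term `E_k^r(x)` in the asymptotic formula for `V r k x`. -/
noncomputable def errorTerm (r k : ℕ) (x : ℝ) : ℝ := V r k x - (2 * x) ^ k / zetaR (r * k)

section ErrorTerm

variable {r k : ℕ} {x : ℝ}

lemma hasSum_errorTerm (hrk : 1 < r * k) (hx : 0 ≤ x) :
    HasSum (fun d : ℕ ↦
        (μ d : ℝ) * (2 ^ k * ((⌊x / (d : ℝ) ^ r⌋₊ : ℝ) ^ k - (x / (d : ℝ) ^ r) ^ k)))
      (errorTerm r k x) := by
  have hr : r ≠ 0 := by rintro rfl; simp at hrk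
  have hk : k ≠ 0 := by rintro rfl; simp at hrk
  have hmain := (hasSum_moebius_div_rpow (s := r * k) (mod_cast hrk)).mul_left ((2 * x) ^ k)
  refine ((hasSum_V hr hk hx).sub hmain).congr_fun fun d ↦ ?_
  rw [← Nat.cast_mul, Real.rpow_natCast, pow_mul]
  ring

lemma abs_errorTerm_le (hrk : 1 < r * (k - 1)) (hx : 0 ≤ x) :
    |errorTerm r k x| ≤ 2 ^ k * k * (∑' d : ℕ, 1 / (d : ℝ) ^ (r * (k - 1))) * x ^ (k - 1) := by
  have hrk' : 1 < r * k := hrk.trans_le (Nat.mul_le_mul_left r (Nat.sub_le k 1))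
  have hbound := (Real.summable_one_div_nat_pow.2 hrk).hasSum.mul_left (2 ^ k * k * x ^ (k - 1))
  rw [mul_right_comm, ← (hasSum_errorTerm hrk' hx).tsum_eq, ← Real.norm_eq_abs]
  refine tsum_of_norm_bounded hbound fun d ↦ ?_
  set y := x / (d : ℝ) ^ r with hy
  have hmoebius : |(μ d : ℝ)| ≤ 1 := mod_cast abs_moebius_le_one
  calc ‖(μ d : ℝ) * (2 ^ k * ((⌊y⌋₊ : ℝ) ^ k - y ^ k))‖
      = |(μ d : ℝ)| * (2 ^ k * |(⌊y⌋₊ : ℝ) ^ k - y ^ k|) := by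
        rw [Real.norm_eq_abs, abs_mul, abs_mul, abs_of_nonneg (by positivity : (0 : ℝ) ≤ 2 ^ k)]
    _ ≤ 1 * (2 ^ k * (k * y ^ (k - 1))) := by
        gcongr
        exact abs_natFloor_pow_sub_pow_le (by positivity) k
    _ = 2 ^ k * k * x ^ (k - 1) * (1 / (d : ℝ) ^ (r * (k - 1))) := by
        rw [hy, div_pow, ← pow_mul]
        ring

lemma le_errorTerm_natFloor_sub_errorTerm (hrk : 1 < r * k) (hx : 0 ≤ x) :
    2 ^ k / zetaR (r * k) * ((x - ⌊x⌋₊) * x ^ (k - 1)) ≤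
      errorTerm r k ⌊x⌋₊ - errorTerm r k x := by
  have hk : k ≠ 0 := by rintro rfl; simp at hrk
  have hzeta : 0 < zetaR (r * k) := zetaR_pos (mod_cast hrk)
  calc 2 ^ k / zetaR (r * k) * ((x - ⌊x⌋₊) * x ^ (k - 1))
      ≤ 2 ^ k / zetaR (r * k) * (x ^ k - (⌊x⌋₊ : ℝ) ^ k) := by
        gcongr
        exact sub_mul_pow_le_pow_sub_pow hk (Nat.cast_nonneg _) (Nat.floor_le hx)
    _ = errorTerm r k ⌊x⌋₊ - errorTerm r k x := by
        rw [errorTerm, errorTerm, V_natFloor r k hx]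
        ring

lemma frequently_le_abs_errorTerm_div (hrk : 1 < r * k) :
    ∃ᶠ x in atTop, 2 ^ k / (4 * zetaR (r * k)) ≤ |errorTerm r k x| / x ^ (k - 1) := by
  have hzeta : 0 < zetaR (r * k) := zetaR_pos (mod_cast hrk)
  set c := 2 ^ k / (4 * zetaR (r * k)) with hc
  refine frequently_atTop.2 fun a ↦ ?_
  obtain ⟨n, hn⟩ := exists_nat_ge (max a 1)
  obtain ⟨han, hn_one⟩ := max_le_iff.1 hn
  by_contra! hsmall
  have hsmall_nat := hsmall n han
  have hsmall_half := hsmall (n + 1 / 2) (by linarith)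
  rw [div_lt_iff₀ (by positivity)] at hsmall_nat hsmall_half
  have hjump := le_errorTerm_natFloor_sub_errorTerm hrk (x := (n : ℝ) + 1 / 2) (by positivity)
  have hfloor : ⌊(n : ℝ) + 1 / 2⌋₊ = n := by
    rw [Nat.floor_eq_iff (by positivity)]
    constructor <;> linarith
  have hcoeff : 2 ^ k / zetaR (r * k) * ((n + 1 / 2 - n) * ((n : ℝ) + 1 / 2) ^ (k - 1)) =
      2 * (c * ((n : ℝ) + 1 / 2) ^ (k - 1)) := by
    rw [hc]
    field_simp
    ring
  have hmono : c * (n : ℝ) ^ (k - 1) ≤ c * ((n : ℝ) + 1 / 2) ^ (k - 1) := by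
    gcongr
    linarith
  rw [hfloor, hcoeff] at hjump
  linarith [le_abs_self (errorTerm r k n), neg_abs_le (errorTerm r k (n + 1 / 2))]

end ErrorTerm

theorem error_term_omega (r k : ℕ) (hr : 1 ≤ r) (hk : 2 ≤ k) (hrk : 3 ≤ r * k) :
    0 < limsup (fun x : ℝ =>
        |(V r k x : ℝ) - (2 * x) ^ k / zetaR (r * k)| / x ^ (k - 1)) atTop := by
  have hrk_one : 1 < r * k := by omega
  have hrk_sub : 1 < r * (k - 1) := by
    obtain rfl | hr_two : r = 1 ∨ 2 ≤ r := by omega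
    · omega
    · exact hr_two.trans (Nat.le_mul_of_pos_right r (by omega))
  have hzeta : 0 < zetaR (r * k) := zetaR_pos (mod_cast hrk_one)
  have hbounded : IsBoundedUnder (· ≤ ·) atTop
      fun x : ℝ ↦ |errorTerm r k x| / x ^ (k - 1) :=
    isBoundedUnder_of_eventually_le <| (eventually_gt_atTop 0).mono fun x hx ↦
      (div_le_iff₀ (by positivity)).2 (abs_errorTerm_le hrk_sub hx.le)
  calc (0 : ℝ) < 2 ^ k / (4 * zetaR (r * k)) := by positivity
    _ ≤ _ := le_limsup_of_frequently_le (frequently_le_abs_errorTerm_div hrk_one) hbounded
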